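/- arXiv:2011.13871 — 3 statements merged into one kernel-verified Lean document; each statement's English description precedes it below -/
import Mathlib

section
/- Let S be an unbounded subset of a real normed vector space X (i.e., the set of norms {‖s‖ : s ∈ S} is not bounded above). Then there exists a linear (not necessarily continuous) functional φ : X → ℝ such that the image φ(S) is an unbounded subset of ℝ. -/
/-- If `S` is an unbounded subset of a real normed vector space `X`, then there exists a
(not necessarily continuous) linear functional `φ : X → ℝ` whose image of `S` is unbounded. -/
theorem stmt_0 {X : Type*} [NormedAddCommGroup X] [NormedSpace ℝ X] (S : Set X)
    (hS : ¬ BddAbove ((fun s => ‖s‖) '' S)) :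
    ∃ φ : X →ₗ[ℝ] ℝ, ¬ Bornology.IsBounded (φ '' S) := by
  -- A continuous `φ` exists: otherwise the evaluations at points of `S` are pointwise bounded on
  -- the complete space of continuous functionals, so Banach–Steinhaus bounds their norms, and by
  -- Hahn–Banach the evaluation at `s` has norm `‖s‖`.
  by_contra! h
  obtain ⟨C, hC⟩ := banach_steinhaus
    (g := fun s : S => NormedSpace.inclusionInDoubleDual ℝ X (s : X)) (fun f => by
      obtain ⟨C, hC⟩ := (h f.toLinearMap).exists_norm_le
      exact ⟨C, fun s => hC _ ⟨s, s.2, rfl⟩⟩)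
  refine hS ⟨C, ?_⟩
  rintro _ ⟨s, hs, rfl⟩
  have hnorm : ‖NormedSpace.inclusionInDoubleDual ℝ X s‖ = ‖s‖ :=
    (NormedSpace.inclusionInDoubleDualLi ℝ (E := X)).norm_map s
  exact hnorm.symm.le.trans (hC ⟨s, hs⟩)
end

section
/- (No fastest convergent series.) Let (x_n) be a sequence of positive real numbers such that ∑_{n=1}^∞ x_n converges. Then there exists a sequence (y_n) of positive real numbers with y_n → ∞ and ∑_{n=1}^∞ x_n y_n < ∞. -/
open Filter

/-!
With tails `r n = ∑_{k ≥ n} x k`, which are positive and tend to `0`, take `y n = 1 / √(r n)`.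
Then `y n → ∞`, and since `x n = r n - r (n + 1)`,
`x n * y n = (√(r n) - √(r (n + 1))) (√(r n) + √(r (n + 1))) / √(r n) ≤ 2 (√(r n) - √(r (n + 1)))`.
The right-hand side telescopes, so the partial sums of `x n * y n` are at most `2 √(r 0)`.
-/

/-- No fastest convergent series: if `∑ x n` is a convergent series of positive reals,
then there is a sequence `(y n)` of positive reals with `y n → ∞` and `∑ x n * y n < ∞`. -/
theorem stmt_9 (x : ℕ → ℝ) (hx : ∀ n, 0 < x n) (hsum : Summable x) :
    ∃ y : ℕ → ℝ, (∀ n, 0 < y n) ∧ Tendsto y atTop atTop ∧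
      Summable (fun n => x n * y n) := by
  obtain ⟨r, hr⟩ : ∃ r : ℕ → ℝ, ∀ n, r n = ∑' k, x (k + n) := ⟨_, fun _ => rfl⟩
  have hs (n : ℕ) : Summable fun k => x (k + n) := (summable_nat_add_iff n).2 hsum
  have hpos (n : ℕ) : 0 < r n := by
    rw [hr]
    exact (hs n).tsum_pos (fun k => (hx _).le) 0 (hx _)
  have hstep (n : ℕ) : r n = x n + r (n + 1) := by
    rw [hr, hr, (hs n).tsum_eq_zero_add, zero_add]
    simp only [add_assoc, add_comm 1 n]
  have hlim : Tendsto (fun n => √(r n)) atTop (nhds 0) := by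
    have h : Tendsto r atTop (nhds 0) := by
      rw [funext hr]
      exact tendsto_sum_nat_add x
    simpa using h.sqrt
  have hsq (n : ℕ) : 0 < √(r n) := Real.sqrt_pos.2 (hpos n)
  have hbound (n : ℕ) : x n * (√(r n))⁻¹ ≤ 2 * (√(r n) - √(r (n + 1))) := by
    rw [← div_eq_mul_inv, div_le_iff₀ (hsq n)]
    have h1 := Real.sq_sqrt (hpos n).le
    have h2 := Real.sq_sqrt (hpos (n + 1)).le
    nlinarith [sq_nonneg (√(r n) - √(r (n + 1))), hstep n]
  refine ⟨fun n => (√(r n))⁻¹, fun n => inv_pos.2 (hsq n), ?_, ?_⟩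
  · exact (tendsto_nhdsWithin_iff.2 ⟨hlim, .of_forall hsq⟩).inv_tendsto_nhdsGT_zero
  · refine summable_of_sum_range_le (c := 2 * √(r 0))
      (fun n => (mul_pos (hx n) (inv_pos.2 (hsq n))).le) fun n => ?_
    calc ∑ i ∈ Finset.range n, x i * (√(r i))⁻¹
        ≤ ∑ i ∈ Finset.range n, 2 * (√(r i) - √(r (i + 1))) :=
          Finset.sum_le_sum fun i _ => hbound i
      _ = 2 * (√(r 0) - √(r n)) := by
          rw [← Finset.mul_sum, Finset.sum_range_sub' fun i => √(r i)]
      _ ≤ 2 * √(r 0) := by linarith [hsq n]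
end

section
/- (No slowest divergent series.) Let (x_n) be a sequence of positive real numbers such that ∑_{n=1}^∞ x_n diverges (to infinity). Then there exists a sequence (y_n) of positive real numbers with y_n → 0 and ∑_{n=1}^∞ x_n y_n = ∞. -/
/-!
Write `S N = ∑ n < N, x n` and take `y n = 1 / √(S (n + 1))`, which tends to `0` because `S`
diverges. Since `x n = S (n + 1) - S n`, factoring the difference of squares gives
`x n * y n ≥ √(S (n + 1)) - √(S n)`; telescoping, the partial sums of `∑ x n * y n` are at least
`√(S N)`, which tends to infinity.
-/

open Filter

/-- No slowest divergent series: if `∑ x n` is a series of positive reals whose partial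
sums tend to infinity, then there is a sequence `(y n)` of positive reals with `y n → 0`
and the partial sums of `∑ x n * y n` tending to infinity. -/
theorem stmt_10 (x : ℕ → ℝ) (hx : ∀ n, 0 < x n)
    (hdiv : Tendsto (fun N => ∑ n ∈ Finset.range N, x n) atTop atTop) :
    ∃ y : ℕ → ℝ, (∀ n, 0 < y n) ∧ Tendsto y atTop (nhds 0) ∧
      Tendsto (fun N => ∑ n ∈ Finset.range N, x n * y n) atTop atTop := by
  -- `S (N + 1)` rather than `S N`, since `S 0 = 0`.
  have hS : ∀ N, 0 < ∑ n ∈ Finset.range (N + 1), x n := fun N =>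
    Finset.sum_pos (fun n _ => hx n) ⟨0, by simp⟩
  refine ⟨fun N => (√(∑ n ∈ Finset.range (N + 1), x n))⁻¹,
    fun N => inv_pos.2 (Real.sqrt_pos.2 (hS N)), ?_, ?_⟩
  · exact tendsto_inv_atTop_zero.comp
      (Real.tendsto_sqrt_atTop.comp (hdiv.comp (tendsto_add_atTop_nat 1)))
  · refine tendsto_atTop_mono (fun N => ?_) (Real.tendsto_sqrt_atTop.comp hdiv)
    simp only [Function.comp_apply]
    induction N with
    | zero => simp
    | succ N ih =>
      rw [Finset.sum_range_succ (fun n => x n * _)]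
      refine le_trans ?_ (add_le_add_left ih _)
      have hpos := Real.sqrt_pos.2 (hS N)
      have hS0 : 0 ≤ ∑ n ∈ Finset.range N, x n := Finset.sum_nonneg fun n _ => (hx n).le
      have hle : √(∑ n ∈ Finset.range N, x n) ≤ √(∑ n ∈ Finset.range (N + 1), x n) :=
        Real.sqrt_le_sqrt (by rw [Finset.sum_range_succ]; linarith [hx N])
      have h1 := Real.sq_sqrt hS0
      have h2 := Real.sq_sqrt (hS N).le
      have hxN : x N = √(∑ n ∈ Finset.range (N + 1), x n) ^ 2
          - √(∑ n ∈ Finset.range N, x n) ^ 2 := by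
        rw [h1, h2, Finset.sum_range_succ]; ring
      -- With `a = √(S N) ≤ b = √(S (N + 1))`, the step reads `b ≤ a + (b ^ 2 - a ^ 2) / b`.
      rw [hxN, ← div_eq_mul_inv, ← sub_le_iff_le_add', le_div_iff₀ hpos]
      nlinarith [Real.sqrt_nonneg (∑ n ∈ Finset.range N, x n)]
end
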